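/- arXiv:1912.02729 — 2 statements merged into one kernel-verified Lean document; each statement's English description precedes it below -/
import Mathlib

section
/- There exists a universal constant C > 0 such that for all d, m ≥ 1, if x^(1),…,x^(m) are i.i.d. N(0, I_d) and y^(1),…,y^(m) are i.i.d. uniform ±1 independent of the points, then the average ground-state energy of the perceptron satisfies (1/d)·E[ inf_{w∈ℝ^d} Σ_{μ=1}^m 1[y^(μ) ≠ sign(wᵀx^(μ))] ] ≥ (α/2)·(1 − C/√α), where α = m/d; i.e. e_gs(α) ≥ (α/2)(1 − C α^{−1/2}). -/
/-!
For `±1` labels the number of errors of `w` is `(m - ∑ y μ * sgn (w · x μ)) / 2`, so it suffices to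
bound the label average of `sup_w ∑ y μ * sgn (w · x μ)` by `72 √(d m)` for every fixed choice of
the points; the constant is then `C = 72`.

For fixed points, the dichotomies cut out by half-spaces through the origin form a finite family of
subsets of `Fin m` of VC dimension at most `d` (`card_le_of_shatters_cells`, by linear dependence of
`d + 1` vectors). The bound without a logarithm holds for every such family
(`vc_rademacher_bound`) and comes from chaining in Hamming distance:

* `log_card_le` (Dudley): a `2⁻ʲ m`-separated subfamily has at most `exp (3 d (j + 2))` members.
  A random sample of `k ≈ 2 ^ (j + 1) log N` coordinates separates all `N` members
  (`exists_separating`), and the Sauer–Shelah lemma bounds the number of traces on `k` coordinates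
  (`card_mul_pow_le`).
* `massart`: the label average of the maximum of `N` signed sums with squared length at most `R` is
  at most `log N / t + t R / 2`.
* `chaining`: passing from separation `2¹⁻ʲ m` to `2⁻ʲ m` costs
  `√(d m) (3 (j + 2) (3/4) ^ j + 4 (2/3) ^ j)`, which is summable in `j`; the coarsest family is a
  singleton and the finest is the whole family.

The minimum over `w` is an infimum over an uncountable set; it is measurable because, for each
dichotomy, the set of point configurations realizing it is a countable union of closed sets
(`measurableSet_mem_cells`).
-/

open MeasureTheory ProbabilityTheory Filter Finset

/-- The Rademacher (uniform ±1) distribution on `ℝ`. -/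
noncomputable def radMeasure : Measure ℝ :=
  ((PMF.bernoulli 2⁻¹ (by norm_num)).map (fun b => if b then (1 : ℝ) else -1)).toMeasure

instance : IsProbabilityMeasure radMeasure :=
  PMF.toMeasure.isProbabilityMeasure _

/-- The standard Gaussian measure `N(0, I_d)` on `Fin d → ℝ`. -/
noncomputable def stdGaussian (d : ℕ) : Measure (Fin d → ℝ) :=
  Measure.pi fun _ => gaussianReal 0 1

/-- The sign function with the convention `sgn 0 = 1`. -/
noncomputable def sgn (t : ℝ) : ℝ := if 0 ≤ t then 1 else -1

/-! ### Rademacher averages and Massart's lemma -/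

/-- The `±1` sign encoded by a boolean label. -/
noncomputable def boolSign (b : Bool) : ℝ := if b then 1 else -1

/-- The `±1` vector of a set `S` of indices: `+1` on `S` and `-1` off `S`. -/
noncomputable def signVec {m : ℕ} (S : Finset (Fin m)) (i : Fin m) : ℝ := if i ∈ S then 1 else -1

/-- The average of `F` over all `2 ^ m` label vectors. -/
noncomputable def labelAvg {m : ℕ} (F : (Fin m → Bool) → ℝ) : ℝ := (∑ y, F y) / 2 ^ m

lemma labelAvg_mono {m : ℕ} {F G : (Fin m → Bool) → ℝ} (h : ∀ y, F y ≤ G y) :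
    labelAvg F ≤ labelAvg G := by
  unfold labelAvg
  gcongr with y
  exact h y

lemma labelAvg_add {m : ℕ} (F G : (Fin m → Bool) → ℝ) :
    labelAvg (fun y => F y + G y) = labelAvg F + labelAvg G := by
  simp [labelAvg, Finset.sum_add_distrib, add_div]

lemma sum_exp_label_le {m : ℕ} (v : Fin m → ℝ) (t : ℝ) :
    ∑ y : Fin m → Bool, Real.exp (t * ∑ i, boolSign (y i) * v i) ≤
      2 ^ m * Real.exp (t ^ 2 * (∑ i, v i ^ 2) / 2) := by
  have h1 : ∑ y : Fin m → Bool, Real.exp (t * ∑ i, boolSign (y i) * v i) =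
      ∏ i : Fin m, ∑ b : Bool, Real.exp (t * (boolSign b * v i)) := by
    rw [Finset.prod_univ_sum, Fintype.piFinset_univ]
    refine Finset.sum_congr rfl fun y _ => ?_
    rw [← Real.exp_sum, Finset.mul_sum]
  have h2 : ∀ i : Fin m, ∑ b : Bool, Real.exp (t * (boolSign b * v i)) ≤
      2 * Real.exp ((t * v i) ^ 2 / 2) := by
    intro i
    have := Real.cosh_le_exp_half_sq (t * v i)
    rw [Real.cosh_eq] at this
    simp only [Fintype.sum_bool, boolSign]
    simp only [if_true, Bool.false_eq_true, if_false, one_mul, neg_mul, mul_neg]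
    linarith
  rw [h1]
  calc _ ≤ ∏ i : Fin m, 2 * Real.exp ((t * v i) ^ 2 / 2) :=
        Finset.prod_le_prod (fun i _ => Finset.sum_nonneg fun b _ => (Real.exp_pos _).le)
          (fun i _ => h2 i)
    _ = _ := by
        rw [Finset.prod_mul_distrib, ← Real.exp_sum]
        simp [mul_pow, Finset.mul_sum, Finset.sum_div]

/-- Massart's finite class lemma, with the free parameter `t` of the exponential moment bound
left unoptimized. -/
lemma massart {m : ℕ} {ι : Type*} (B : Finset ι) (hB : B.Nonempty) (v : ι → Fin m → ℝ) (R t : ℝ)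
    (hR : ∀ b ∈ B, ∑ i, v b i ^ 2 ≤ R) (ht : 0 < t) :
    labelAvg (fun y => B.sup' hB (fun b => ∑ i, boolSign (y i) * v b i)) ≤
      Real.log #B / t + t * R / 2 := by
  set F : (Fin m → Bool) → ℝ := fun y => B.sup' hB (fun b => ∑ i, boolSign (y i) * v b i)
  have hN : (0 : ℝ) < #B := by exact_mod_cast hB.card_pos
  have hJ : Real.exp (t * labelAvg F) ≤ labelAvg (fun y => Real.exp (t * F y)) := by
    have := convexOn_exp.map_sum_le (t := (Finset.univ : Finset (Fin m → Bool)))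
      (w := fun _ => ((2 : ℝ) ^ m)⁻¹) (p := fun y => t * F y) (by intros; positivity)
      (by simp) (by simp)
    simp only [smul_eq_mul, ← Finset.mul_sum] at this
    simp only [labelAvg, div_eq_inv_mul]
    rw [mul_left_comm]
    exact this
  have hS : ∑ y, Real.exp (t * F y) ≤ #B * (2 ^ m * Real.exp (t ^ 2 * R / 2)) := by
    calc ∑ y, Real.exp (t * F y)
        ≤ ∑ y : Fin m → Bool, ∑ b ∈ B, Real.exp (t * ∑ i, boolSign (y i) * v b i) := by
          refine Finset.sum_le_sum fun y _ => ?_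
          obtain ⟨b, hb, hFb⟩ := Finset.exists_mem_eq_sup' hB
            (fun b => ∑ i, boolSign (y i) * v b i)
          have : F y = ∑ i, boolSign (y i) * v b i := hFb
          rw [this]
          exact Finset.single_le_sum
            (f := fun b => Real.exp (t * ∑ i, boolSign (y i) * v b i))
            (fun b _ => (Real.exp_pos _).le) hb
      _ = ∑ b ∈ B, ∑ y : Fin m → Bool, Real.exp (t * ∑ i, boolSign (y i) * v b i) :=
          Finset.sum_comm
      _ ≤ ∑ b ∈ B, 2 ^ m * Real.exp (t ^ 2 * R / 2) := by
          refine Finset.sum_le_sum fun b hb => (sum_exp_label_le _ _).trans ?_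
          gcongr
          exact hR b hb
      _ = _ := by simp
  have hE : Real.exp (t * labelAvg F) ≤ Real.exp (Real.log #B + t ^ 2 * R / 2) := by
    rw [Real.exp_add, Real.exp_log hN]
    refine hJ.trans ?_
    unfold labelAvg
    rw [div_le_iff₀ (by positivity)]
    linarith
  have := Real.exp_le_exp.mp hE
  have e : Real.log #B / t + t * R / 2 = (Real.log #B + t ^ 2 * R / 2) / t := by
    field_simp
  rw [e, le_div_iff₀ ht]
  linarith

/-! ### Packing numbers of VC classes -/

/-- Sauer–Shelah on a set `I` of coordinates separating the members of `B`, in generating-function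
form: the shattered sets `T ⊆ I` have `#T ≤ d`, and `∑ T ⊆ I, x ^ #T = (1 + x) ^ #I`. -/
lemma card_mul_pow_le {m d : ℕ} (B : Finset (Finset (Fin m))) (I : Finset (Fin m)) (x : ℝ)
    (hx : 0 < x) (hx1 : x ≤ 1) (hd : ∀ s, B.Shatters s → #s ≤ d)
    (hinj : Set.InjOn (fun S => S ∩ I) (B : Set (Finset (Fin m)))) :
    (#B : ℝ) * x ^ d ≤ Real.exp (x * #I) := by
  set B' := B.image (fun S => S ∩ I)
  have hc : #B = #B' := (Finset.card_image_of_injOn hinj).symm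
  have hsub : ∀ T ∈ B'.shatterer, T ⊆ I ∧ #T ≤ d := by
    intro T hT
    rw [Finset.mem_shatterer] at hT
    have hTI : T ⊆ I := by
      obtain ⟨u, hu, hTu⟩ := hT.exists_superset
      obtain ⟨S, -, rfl⟩ := Finset.mem_image.mp hu
      exact hTu.trans Finset.inter_subset_right
    refine ⟨hTI, hd T fun t ht => ?_⟩
    obtain ⟨u, hu, hTu⟩ := hT ht
    obtain ⟨S, hS, rfl⟩ := Finset.mem_image.mp hu
    refine ⟨S, hS, ?_⟩
    rw [← hTu]
    ext i
    simp only [Finset.mem_inter]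
    exact ⟨fun h => ⟨h.1, h.2, hTI h.1⟩, fun h => ⟨h.1, h.2.1⟩⟩
  calc (#B : ℝ) * x ^ d ≤ #B'.shatterer * x ^ d := by
        rw [hc]
        have h : (#B' : ℝ) ≤ #B'.shatterer := by
          exact_mod_cast Finset.card_le_card_shatterer B'
        exact mul_le_mul_of_nonneg_right h (by positivity)
    _ = ∑ T ∈ B'.shatterer, x ^ d := by simp
    _ ≤ ∑ T ∈ B'.shatterer, x ^ #T :=
        Finset.sum_le_sum fun T hT => pow_le_pow_of_le_one hx.le hx1 (hsub T hT).2
    _ ≤ ∑ T ∈ I.powerset, x ^ #T :=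
        Finset.sum_le_sum_of_subset_of_nonneg
          (fun T hT => Finset.mem_powerset.mpr (hsub T hT).1) (fun _ _ _ => by positivity)
    _ = (x + 1) ^ #I := by
        rw [← Finset.sum_pow_mul_eq_add_pow]
        simp
    _ ≤ Real.exp x ^ #I := by
        gcongr
        exact Real.add_one_le_exp x
    _ = _ := by rw [← Real.exp_nat_mul, mul_comm]

/-- A union bound over pairs: among `k` coordinates drawn uniformly with replacement, a given pair
at Hamming distance at least `r` agrees everywhere with probability at most `exp (-(r / m) k)`. -/
lemma exists_separating {m : ℕ} (hm : 0 < m) (B : Finset (Finset (Fin m))) (hB : B.Nonempty)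
    (r : ℝ) (k : ℕ)
    (hsep : ∀ S ∈ B, ∀ T ∈ B, S ≠ T → r ≤ (#(symmDiff S T) : ℝ))
    (hk : (#B : ℝ) ^ 2 * Real.exp (-(r / m) * k) ≤ 1) :
    ∃ I : Finset (Fin m), #I ≤ k ∧
      Set.InjOn (fun S => S ∩ I) (B : Set (Finset (Fin m))) := by
  by_contra! hcon
  have hm' : (0 : ℝ) < m := by exact_mod_cast hm
  have hcover : (Finset.univ : Finset (Fin k → Fin m)) ⊆
      B.offDiag.biUnion fun p => Fintype.piFinset fun _ => (symmDiff p.1 p.2)ᶜ := by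
    intro t _
    have hI := hcon (Finset.univ.image t) (Finset.card_image_le.trans (by simp))
    simp only [Set.InjOn, not_forall] at hI
    obtain ⟨S, hS, T, hT, hST, hne⟩ := hI
    refine Finset.mem_biUnion.mpr ⟨(S, T), Finset.mem_offDiag.mpr ⟨hS, hT, hne⟩, ?_⟩
    rw [Fintype.mem_piFinset]
    intro i
    have := Finset.ext_iff.mp hST (t i)
    simp at this
    simp
    tauto
  have h1 := (Finset.card_le_card hcover).trans Finset.card_biUnion_le
  have h2 : (m : ℝ) ^ k ≤ ∑ p ∈ B.offDiag, (m - (#(symmDiff p.1 p.2) : ℝ)) ^ k := by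
    have e : ∀ p : Finset (Fin m) × Finset (Fin m),
        (m - (#(symmDiff p.1 p.2) : ℝ)) ^ k =
          ((#(Fintype.piFinset fun _ : Fin k => (symmDiff p.1 p.2)ᶜ) : ℕ) : ℝ) := by
      intro p
      rw [Fintype.card_piFinset, Finset.prod_const, Finset.card_compl, Finset.card_univ,
        Fintype.card_fin, Fintype.card_fin, Nat.cast_pow, Nat.cast_sub]
      simpa using Finset.card_le_univ (symmDiff p.1 p.2)
    simp_rw [e]
    rw [Finset.card_univ] at h1
    simp only [Fintype.card_pi, Fintype.card_fin, Finset.prod_const, Finset.card_univ] at h1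
    exact_mod_cast h1
  have h3 : ∀ p ∈ B.offDiag, (m - (#(symmDiff p.1 p.2) : ℝ)) ^ k ≤
      (m : ℝ) ^ k * Real.exp (-(r / m) * k) := by
    intro p hp
    obtain ⟨hp1, hp2, hne⟩ := Finset.mem_offDiag.mp hp
    have hr := hsep _ hp1 _ hp2 hne
    have hle : (#(symmDiff p.1 p.2) : ℝ) ≤ m := by
      have := Finset.card_le_univ (symmDiff p.1 p.2)
      rw [Fintype.card_fin] at this
      exact_mod_cast this
    have hb : (m - (#(symmDiff p.1 p.2) : ℝ)) ≤ m * Real.exp (-(r / m)) := by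
      have := Real.add_one_le_exp (-(r / m))
      calc (m - (#(symmDiff p.1 p.2) : ℝ)) ≤ m - r := by linarith
        _ = m * (-(r / m) + 1) := by field_simp; ring
        _ ≤ _ := by gcongr
    calc _ ≤ (m * Real.exp (-(r / m))) ^ k := pow_le_pow_left₀ (by linarith) hb k
      _ = _ := by rw [mul_pow, ← Real.exp_nat_mul, mul_comm (k : ℝ)]
  have h4 := h2.trans (Finset.sum_le_sum h3)
  rw [Finset.sum_const, nsmul_eq_mul, Finset.offDiag_card] at h4
  have hN : 0 < #B := hB.card_pos
  have hlt : ((#B * #B - #B : ℕ) : ℝ) < (#B : ℝ) ^ 2 := by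
    have : #B * #B - #B < #B * #B := Nat.sub_lt (Nat.mul_pos hN hN) hN
    rw [sq]
    exact_mod_cast this
  have hmk : (0 : ℝ) < (m : ℝ) ^ k := by positivity
  have hexp := Real.exp_pos (-(r / m) * k)
  have h5 : ((#B * #B - #B : ℕ) : ℝ) * ((m : ℝ) ^ k * Real.exp (-(r / m) * k)) <
      (#B : ℝ) ^ 2 * ((m : ℝ) ^ k * Real.exp (-(r / m) * k)) := by gcongr
  nlinarith

/-- Dudley's packing bound: a family of VC dimension at most `d` whose members are `2⁻ʲ m`-separated
in Hamming distance has at most `exp (3 d (j + 2))` members. -/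
lemma log_card_le {m d : ℕ} (hm : 0 < m) (hd1 : 1 ≤ d) (B : Finset (Finset (Fin m)))
    (hB : B.Nonempty) (j : ℕ)
    (hd : ∀ s, B.Shatters s → #s ≤ d)
    (hsep : ∀ S ∈ B, ∀ T ∈ B, S ≠ T → (m : ℝ) / 2 ^ j ≤ (#(symmDiff S T) : ℝ)) :
    Real.log #B ≤ 3 * d * (j + 2) := by
  have hN : (0 : ℝ) < #B := by exact_mod_cast hB.card_pos
  have hN1 : (1 : ℝ) ≤ #B := by exact_mod_cast hB.card_pos
  have hm' : (0 : ℝ) < m := by exact_mod_cast hm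
  set l := Real.log #B with hl
  have hl0 : 0 ≤ l := Real.log_nonneg hN1
  -- `k = ⌈2 l / ε⌉` with `ε = 2⁻ʲ` makes `#B ^ 2 * exp (-ε k) ≤ 1`; afterwards the choice
  -- `x = ε / 4` gives `x k ≤ l / 2 + 1 / 4`, which is absorbed in the left-hand side.
  set k := ⌈2 * l * 2 ^ j⌉₊ with hk
  have hk1 : 2 * l * 2 ^ j ≤ k := Nat.le_ceil _
  have hk2 : (k : ℝ) ≤ 2 * l * 2 ^ j + 1 := (Nat.ceil_lt_add_one (by positivity)).le
  obtain ⟨I, hI, hinj⟩ := exists_separating hm B hB _ k hsep (by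
    have e1 : (#B : ℝ) ^ 2 = Real.exp (2 * l) := by
      rw [hl, two_mul, Real.exp_add, Real.exp_log hN, sq]
    rw [e1, ← Real.exp_add, Real.exp_le_one_iff]
    have e2 : (m : ℝ) / 2 ^ j / m = 1 / 2 ^ j := by field_simp
    rw [e2]
    have : 2 * l ≤ 1 / 2 ^ j * k := by
      rw [div_mul_eq_mul_div, one_mul, le_div_iff₀ (by positivity)]
      exact hk1
    linarith)
  have hp1 : (1 : ℝ) ≤ 2 ^ j := one_le_pow₀ (by norm_num)
  have hc := card_mul_pow_le B I (1 / 2 ^ (j + 2)) (by positivity)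
    (by rw [div_le_one (by positivity)]; exact one_le_pow₀ (by norm_num)) hd hinj
  have hlog := Real.log_le_log (by positivity) hc
  rw [Real.log_exp, Real.log_mul hN.ne' (by positivity), Real.log_pow, Real.log_div one_ne_zero
    (by positivity), Real.log_one, Real.log_pow, ← hl] at hlog
  have hI' : (#I : ℝ) ≤ k := by exact_mod_cast hI
  have hx : 1 / 2 ^ (j + 2) * (#I : ℝ) ≤ l / 2 + 1 / 4 := by
    rw [div_mul_eq_mul_div, one_mul, div_le_iff₀ (by positivity), pow_add]
    nlinarith
  have hlog2 : Real.log 2 ≤ 1 := by linarith [Real.log_two_lt_d9]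
  have hd' : (1 : ℝ) ≤ d := by exact_mod_cast hd1
  have hj : (0 : ℝ) ≤ j := Nat.cast_nonneg j
  push_cast at hlog
  have h6 : (d : ℝ) * ((j + 2) * Real.log 2) ≤ d * ((j + 2) * 1) := by gcongr
  nlinarith

/-! ### Chaining -/

lemma signVec_sub_sq {m : ℕ} (S T : Finset (Fin m)) :
    ∑ i, (signVec S i - signVec T i) ^ 2 = 4 * (#(symmDiff S T) : ℝ) := by
  have : ∀ i, (signVec S i - signVec T i) ^ 2 = if i ∈ symmDiff S T then (4 : ℝ) else 0 := by
    intro i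
    by_cases h1 : i ∈ S <;> by_cases h2 : i ∈ T <;>
      simp [signVec, Finset.mem_symmDiff, h1, h2] <;> norm_num
  simp_rw [this]
  simp [mul_comm]

/-- The chaining bound, by induction on the scale. A `2⁻ʲ m`-separated family is compared with a maximal `2¹⁻ʲ m`-separated
subfamily: each member has a neighbour there, and Massart's lemma controls the differences. The
bracket telescopes the resulting increments `3 (j + 2) (3/4) ^ j + 4 (2/3) ^ j`. -/
lemma chaining {m d : ℕ} (hm : 0 < m) (hd1 : 1 ≤ d) (j : ℕ) :
    ∀ (B : Finset (Finset (Fin m))) (hB : B.Nonempty), (∀ s, B.Shatters s → #s ≤ d) →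
    (∀ S ∈ B, ∀ T ∈ B, S ≠ T → 2 * (m : ℝ) / 2 ^ j ≤ (#(symmDiff S T) : ℝ)) →
    labelAvg (fun y => B.sup' hB (fun S => ∑ i, boolSign (y i) * signVec S i)) ≤
      Real.sqrt d * Real.sqrt m *
        (72 - (12 * j + 60) * (3 / 4) ^ j - 12 * (2 / 3) ^ j) := by
  have hm' : (0 : ℝ) < m := by exact_mod_cast hm
  have hd' : (0 : ℝ) < d := by exact_mod_cast hd1
  induction j with
  | zero =>
    intro B hB _ hsep
    -- Hamming distances are at most `m < 2 m`, so `B` is a single set `S`.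
    obtain ⟨S, hS⟩ := hB
    have hBS : B = {S} := by
      rw [Finset.eq_singleton_iff_unique_mem]
      refine ⟨hS, fun T hT => ?_⟩
      by_contra hne
      have h1 := hsep T hT S hS hne
      have h2 := Finset.card_le_univ (symmDiff T S)
      rw [Fintype.card_fin] at h2
      have h3 : (#(symmDiff T S) : ℝ) ≤ m := by exact_mod_cast h2
      norm_num at h1
      linarith
    subst hBS
    have := fun t ht => massart {S} (Finset.singleton_nonempty S) signVec (m : ℝ) t
      (by intro b _; apply le_of_eq
          have : ∀ i, signVec b i ^ 2 = 1 := by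
            intro i; unfold signVec; split_ifs <;> norm_num
          simp [this]) ht
    norm_num
    simp only [Finset.sup'_singleton, Finset.card_singleton, Nat.cast_one, Real.log_one,
      zero_div, zero_add] at this
    by_contra! hpos
    have h := this _ (div_pos hpos hm')
    rw [div_mul_cancel₀ _ hm'.ne'] at h
    linarith
  | succ j ih =>
    intro B hB hvc hsep
    have hsep' : ∀ S ∈ B, ∀ T ∈ B, S ≠ T → (m : ℝ) / 2 ^ j ≤ (#(symmDiff S T) : ℝ) := by
      intro S hS T hT hne
      have := hsep S hS T hT hne
      rw [pow_succ] at this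
      convert this using 1
      field_simp
    obtain ⟨S₀, hS₀⟩ := hB
    have hB : B.Nonempty := ⟨S₀, hS₀⟩
    classical
    let P : Finset (Finset (Fin m)) → Prop := fun D =>
      ∀ S ∈ D, ∀ T ∈ D, S ≠ T → 2 * (m : ℝ) / 2 ^ j ≤ (#(symmDiff S T) : ℝ)
    obtain ⟨D, hD0, hDmax⟩ := Finset.exists_le_maximal (a := {S₀}) (B.powerset.filter P) (by
      simp only [Finset.mem_filter, Finset.mem_powerset, Finset.singleton_subset_iff]
      refine ⟨hS₀, ?_⟩
      intro S hS T hT hne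
      rw [Finset.mem_singleton] at hS hT
      exact absurd (hS.trans hT.symm) hne)
    have hDmem := Finset.mem_filter.mp hDmax.prop
    have hDB : D ⊆ B := Finset.mem_powerset.mp hDmem.1
    have hDP : P D := hDmem.2
    have hDne : D.Nonempty := ⟨S₀, hD0 (Finset.mem_singleton_self _)⟩
    have hproj : ∀ S : Finset (Fin m), ∃ T, S ∈ B → T ∈ D ∧
        (#(symmDiff S T) : ℝ) ≤ 2 * (m : ℝ) / 2 ^ j := by
      intro S
      by_cases hS : S ∈ B
      swap
      · exact ⟨S, fun h => absurd h hS⟩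
      by_contra! hcon
      have hfar : ∀ T ∈ D, 2 * (m : ℝ) / 2 ^ j ≤ (#(symmDiff S T) : ℝ) :=
        fun T hT => ((hcon T).2 hT).le
      have hins : insert S D ∈ B.powerset.filter P := by
        rw [Finset.mem_filter, Finset.mem_powerset]
        refine ⟨Finset.insert_subset hS hDB, ?_⟩
        intro U hU V hV hne
        rcases Finset.mem_insert.mp hU with rfl | hU' <;>
          rcases Finset.mem_insert.mp hV with rfl | hV'
        · exact absurd rfl hne
        · exact hfar V hV'
        · rw [symmDiff_comm]; exact hfar U hU'
        · exact hDP U hU' V hV' hne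
      have hSD : S ∈ D := hDmax.le_of_ge hins (Finset.subset_insert S D)
        (Finset.mem_insert_self S D)
      have := (hcon S).2 hSD
      simp at this
      have h0 : 0 < 2 * (m : ℝ) / 2 ^ j := by positivity
      linarith
    choose π hπ using hproj
    have hsplit : ∀ y : Fin m → Bool,
        B.sup' hB (fun S => ∑ i, boolSign (y i) * signVec S i) ≤
        D.sup' hDne (fun S => ∑ i, boolSign (y i) * signVec S i) +
        B.sup' hB (fun S => ∑ i, boolSign (y i) * (signVec S i - signVec (π S) i)) := by
      intro y
      refine Finset.sup'_le _ _ fun S hS => ?_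
      have h1 := Finset.le_sup' (fun S => ∑ i, boolSign (y i) * signVec S i) (hπ S hS).1
      have h2 := Finset.le_sup'
        (fun S => ∑ i, boolSign (y i) * (signVec S i - signVec (π S) i)) hS
      simp only [mul_sub, Finset.sum_sub_distrib] at h1 h2 ⊢
      linarith
    have hIH := ih D hDne (fun s hs => hvc s (hs.mono_left hDB)) hDP
    have ha : 0 < Real.sqrt d := Real.sqrt_pos.mpr hd'
    have hb : 0 < Real.sqrt m := Real.sqrt_pos.mpr hm'
    have hM := massart B hB (fun S i => signVec S i - signVec (π S) i) (8 * m / 2 ^ j)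
      (Real.sqrt d / Real.sqrt m * (4 / 3) ^ j) (by
        intro S hS
        rw [signVec_sub_sq]
        have := (hπ S hS).2
        calc 4 * (#(symmDiff S (π S)) : ℝ) ≤ 4 * (2 * (m : ℝ) / 2 ^ j) := by gcongr
          _ = _ := by ring) (by positivity)
    have hlog := log_card_le hm hd1 B hB j hvc hsep'
    have hda : (d : ℝ) = Real.sqrt d * Real.sqrt d := (Real.mul_self_sqrt hd'.le).symm
    have hmb : (m : ℝ) = Real.sqrt m * Real.sqrt m := (Real.mul_self_sqrt hm'.le).symm
    set a := Real.sqrt d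
    set b := Real.sqrt m
    have hterm1 : Real.log #B / (a / b * (4 / 3) ^ j) ≤ a * b * (3 * (j + 2) * (3 / 4) ^ j) := by
      rw [div_le_iff₀ (by positivity)]
      refine hlog.trans (le_of_eq ?_)
      rw [hda]
      have : ((3 : ℝ) / 4) ^ j * (4 / 3) ^ j = 1 := by rw [← mul_pow]; norm_num
      calc 3 * (a * a) * ((j : ℝ) + 2)
          = 3 * (a * a) * ((j : ℝ) + 2) * (((3 : ℝ) / 4) ^ j * (4 / 3) ^ j) := by
            rw [this, mul_one]
        _ = _ := by field_simp
    have hterm2 : a / b * (4 / 3) ^ j * (8 * m / 2 ^ j) / 2 = a * b * (4 * (2 / 3) ^ j) := by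
      rw [hmb]
      have : ((2 : ℝ) / 3) ^ j = (4 / 3) ^ j / 2 ^ j := by rw [← div_pow]; norm_num
      rw [this]
      field_simp
      ring
    refine (labelAvg_mono hsplit).trans ?_
    rw [labelAvg_add]
    refine (add_le_add hIH (hM.trans (add_le_add hterm1 hterm2.le))).trans (le_of_eq ?_)
    push_cast
    ring

/-- The distribution-free bound `𝔼 sup_{S ∈ B} ∑ᵢ yᵢ σ_S(i) ≤ 72 √(d m)` for a family of VC
dimension at most `d`. -/
lemma vc_rademacher_bound {m d : ℕ} (hm : 0 < m) (hd1 : 1 ≤ d) (B : Finset (Finset (Fin m)))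
    (hB : B.Nonempty) (hvc : ∀ s, B.Shatters s → #s ≤ d) :
    labelAvg (fun y => B.sup' hB (fun S => ∑ i, boolSign (y i) * signVec S i)) ≤
      72 * (Real.sqrt d * Real.sqrt m) := by
  -- Distinct sets are at distance at least `1 ≥ 2 m / 2 ^ (2 m)`.
  have h := chaining hm hd1 (2 * m) B hB hvc (by
    intro S _ T _ hne
    have h1 : 1 ≤ #(symmDiff S T) := by
      rw [Nat.one_le_iff_ne_zero, Finset.card_ne_zero, Finset.nonempty_iff_ne_empty]
      intro h
      exact hne (symmDiff_eq_bot.mp h)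
    have h2 : (1 : ℝ) ≤ #(symmDiff S T) := by exact_mod_cast h1
    refine le_trans ?_ h2
    rw [div_le_one (by positivity)]
    have := (Nat.lt_two_pow_self (n := 2 * m)).le
    exact_mod_cast this)
  refine h.trans ?_
  rw [mul_comm (72 : ℝ)]
  gcongr
  have : (0 : ℝ) ≤ (12 * ((2 * m : ℕ) : ℝ) + 60) * (3 / 4) ^ (2 * m) := by positivity
  have : (0 : ℝ) ≤ 12 * (2 / 3) ^ (2 * m) := by positivity
  linarith

/-! ### Half-spaces through the origin -/

/-- The set of points classified `+1` by the weight `w`. -/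
noncomputable def cell {m d : ℕ} (x : Fin m → Fin d → ℝ) (w : Fin d → ℝ) : Finset (Fin m) :=
  Finset.univ.filter fun μ => 0 ≤ ∑ i, w i * x μ i

open Classical in
/-- The dichotomies of the points `x` realized by half-spaces through the origin. -/
noncomputable def cells {m d : ℕ} (x : Fin m → Fin d → ℝ) : Finset (Finset (Fin m)) :=
  Finset.univ.filter fun S => ∃ w, cell x w = S

lemma mem_cells {m d : ℕ} {x : Fin m → Fin d → ℝ} {S : Finset (Fin m)} :
    S ∈ cells x ↔ ∃ w, cell x w = S := by
  simp [cells]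

lemma cells_nonempty {m d : ℕ} (x : Fin m → Fin d → ℝ) : (cells x).Nonempty :=
  ⟨cell x 0, mem_cells.mpr ⟨0, rfl⟩⟩

/-- Half-spaces through the origin of `ℝ^d` have VC dimension at most `d`: a linear relation
`∑ g μ • x μ = 0` with some `g μ < 0` forbids the dichotomy `{μ | 0 ≤ g μ}`. -/
lemma card_le_of_shatters_cells {m d : ℕ} (x : Fin m → Fin d → ℝ) (s : Finset (Fin m))
    (hs : (cells x).Shatters s) : #s ≤ d := by
  by_contra! hlt
  have hdep : ¬ LinearIndependent ℝ (fun μ : s => x μ) := by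
    intro h
    have := h.fintype_card_le_finrank
    simp at this
    omega
  rw [Fintype.not_linearIndependent_iff] at hdep
  have hneg : ∃ g : s → ℝ, ∑ μ, g μ • x μ = 0 ∧ ∃ μ, g μ < 0 := by
    obtain ⟨g, hg, μ, hμ⟩ := hdep
    rcases lt_or_gt_of_ne hμ with h | h
    · exact ⟨g, hg, μ, h⟩
    · refine ⟨-g, ?_, μ, by simpa using h⟩
      simp only [Pi.neg_apply, neg_smul, Finset.sum_neg_distrib, hg, neg_zero]
  obtain ⟨g, hg, μ₀, hμ₀⟩ := hneg
  classical
  obtain ⟨u, hu, hsu⟩ := hs (t := (Finset.univ.filter fun μ : s => 0 ≤ g μ).map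
    (Function.Embedding.subtype _)) (by
      intro i hi
      obtain ⟨a, -, rfl⟩ := Finset.mem_map.mp hi
      exact a.2)
  obtain ⟨w, rfl⟩ := mem_cells.mp hu
  have hiff : ∀ μ : s, 0 ≤ ∑ i, w i * x μ i ↔ 0 ≤ g μ := by
    intro μ
    have := Finset.ext_iff.mp hsu μ
    simpa [cell] using this
  have hsum : ∑ μ : s, g μ * ∑ i, w i * x μ i = 0 := by
    have h1 : ∀ i, ∑ μ : s, g μ * x μ i = 0 := by
      intro i
      have := congrFun hg i
      simpa using this
    simp only [Finset.mul_sum]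
    rw [Finset.sum_comm]
    refine Finset.sum_eq_zero fun i _ => ?_
    rw [← mul_zero (w i), ← h1 i, Finset.mul_sum]
    exact Finset.sum_congr rfl fun μ _ => by ring
  have hpos : 0 < ∑ μ : s, g μ * ∑ i, w i * x μ i := by
    refine Finset.sum_pos' (fun μ _ => ?_) ⟨μ₀, Finset.mem_univ _, ?_⟩
    · by_cases h : 0 ≤ g μ
      · exact mul_nonneg h ((hiff μ).mpr h)
      · have h' : ¬ 0 ≤ ∑ i, w i * x μ i := fun h2 => h ((hiff μ).mp h2)
        exact mul_nonneg_of_nonpos_of_nonpos (by linarith) (by linarith)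
    · have h' : ¬ 0 ≤ ∑ i, w i * x μ₀ i := fun h2 => absurd ((hiff μ₀).mp h2) (by linarith)
      exact mul_pos_of_neg_of_neg hμ₀ (by linarith)
  linarith

/-! ### The minimal number of errors: measurability and integration -/

/-- The number of misclassified samples, minimized over the weights. -/
noncomputable def minErr {m d : ℕ} (p : (Fin m → ℝ) × (Fin m → Fin d → ℝ)) : ℝ :=
  ⨅ w : Fin d → ℝ, ∑ μ, if p.1 μ ≠ sgn (∑ i, w i * p.2 μ i) then (1 : ℝ) else 0

lemma err_eq_cell {m d : ℕ} (p : (Fin m → ℝ) × (Fin m → Fin d → ℝ)) (w : Fin d → ℝ) :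
    (∑ μ, if p.1 μ ≠ sgn (∑ i, w i * p.2 μ i) then (1 : ℝ) else 0) =
      ∑ μ, if p.1 μ ≠ signVec (cell p.2 w) μ then (1 : ℝ) else 0 := by
  refine Finset.sum_congr rfl fun μ _ => ?_
  have h : sgn (∑ i, w i * p.2 μ i) = signVec (cell p.2 w) μ := by
    simp only [signVec, cell, sgn, Finset.mem_filter, Finset.mem_univ, true_and]
  rw [h]

lemma bddBelow_err {m d : ℕ} (p : (Fin m → ℝ) × (Fin m → Fin d → ℝ)) :
    BddBelow (Set.range fun w : Fin d → ℝ =>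
      ∑ μ, if p.1 μ ≠ sgn (∑ i, w i * p.2 μ i) then (1 : ℝ) else 0) :=
  ⟨0, by
    rintro _ ⟨w, rfl⟩
    exact Finset.sum_nonneg fun μ _ => by split_ifs <;> norm_num⟩

/-- The event that a dichotomy is realizable is a countable union of closed sets: after scaling, the
strict inequalities may be taken `≤ -1`, and the weight may be confined to a compact ball, so that
projecting the weight away preserves closedness. -/
lemma measurableSet_mem_cells {m d : ℕ} (S : Finset (Fin m)) :
    MeasurableSet {x : Fin m → Fin d → ℝ | S ∈ cells x} := by
  have hU : {x : Fin m → Fin d → ℝ | S ∈ cells x} = ⋃ n : ℕ,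
      (Prod.snd '' {q : Metric.closedBall (0 : Fin d → ℝ) n × (Fin m → Fin d → ℝ) |
        (∀ μ ∈ S, 0 ≤ ∑ i, q.1.1 i * q.2 μ i) ∧
        (∀ μ ∉ S, ∑ i, q.1.1 i * q.2 μ i ≤ -1)}) := by
    ext x
    simp only [Set.mem_ofPred_eq, Set.mem_iUnion, Set.mem_image, mem_cells]
    constructor
    · rintro ⟨w, rfl⟩
      have hc : ∃ c : ℝ, 0 < c ∧ ∀ μ ∉ cell x w, c * ∑ i, w i * x μ i ≤ -1 := by
        have hneg : ∀ μ ∉ cell x w, ∑ i, w i * x μ i < 0 := by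
          intro μ hμ
          simpa [cell] using hμ
        refine ⟨1 + ∑ μ, |(∑ i, w i * x μ i)|⁻¹, by positivity, fun μ hμ => ?_⟩
        have h1 := hneg μ hμ
        have h2 : |(∑ i, w i * x μ i)|⁻¹ ≤ 1 + ∑ ν, |(∑ i, w i * x ν i)|⁻¹ := by
          have := Finset.single_le_sum (f := fun ν => |(∑ i, w i * x ν i)|⁻¹)
            (fun ν _ => by positivity) (Finset.mem_univ μ)
          linarith
        rw [abs_of_neg h1] at h2
        have h3 := mul_le_mul_of_nonpos_right h2 h1.le
        have h4 : (-∑ i, w i * x μ i)⁻¹ * ∑ i, w i * x μ i = -1 := by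
          have := h1.ne
          field_simp
        linarith
      obtain ⟨c, hc0, hc⟩ := hc
      obtain ⟨n, hn⟩ := exists_nat_ge ‖c • w‖
      refine ⟨n, (⟨c • w, by simpa using hn⟩, x), ⟨fun μ hμ => ?_, fun μ hμ => ?_⟩, rfl⟩
      · have : 0 ≤ ∑ i, w i * x μ i := by simpa [cell] using hμ
        simpa [mul_assoc, ← Finset.mul_sum] using mul_nonneg hc0.le this
      · simpa [mul_assoc, ← Finset.mul_sum] using hc μ hμ
    · rintro ⟨n, ⟨w, x'⟩, ⟨h1, h2⟩, rfl⟩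
      refine ⟨w.1, ?_⟩
      ext μ
      simp only [cell, Finset.mem_filter, Finset.mem_univ, true_and]
      constructor
      · intro h
        by_contra hμ
        have := h2 μ hμ
        simp only at this
        linarith
      · exact h1 μ
  rw [hU]
  refine MeasurableSet.iUnion fun n => IsClosed.measurableSet ?_
  refine isClosedMap_snd_of_compactSpace _ ?_
  simp only [Set.ofPred_and, Set.ofPred_forall]
  have hcont : ∀ μ : Fin m, Continuous
      fun q : Metric.closedBall (0 : Fin d → ℝ) n × (Fin m → Fin d → ℝ) =>
        ∑ i, q.1.1 i * q.2 μ i := fun μ =>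
    continuous_finsetSum _ fun i _ =>
      ((continuous_apply i).comp (continuous_subtype_val.comp continuous_fst)).mul (by fun_prop)
  refine IsClosed.inter ?_ ?_
  · exact isClosed_iInter fun μ => isClosed_iInter fun _ => isClosed_le continuous_const (hcont μ)
  · exact isClosed_iInter fun μ => isClosed_iInter fun _ => isClosed_le (hcont μ) continuous_const

lemma measurable_minErr {m d : ℕ} :
    Measurable (minErr : (Fin m → ℝ) × (Fin m → Fin d → ℝ) → ℝ) := by
  refine measurable_of_Iio fun c => ?_
  have hU : (minErr : (Fin m → ℝ) × (Fin m → Fin d → ℝ) → ℝ) ⁻¹' Set.Iio c =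
      ⋃ S : Finset (Fin m), {p | S ∈ cells p.2} ∩
        {p | (∑ μ, if p.1 μ ≠ signVec S μ then (1 : ℝ) else 0) < c} := by
    ext p
    simp only [Set.mem_preimage, Set.mem_Iio, Set.mem_iUnion, Set.mem_inter_iff, Set.mem_ofPred_eq,
      mem_cells]
    unfold minErr
    rw [ciInf_lt_iff (bddBelow_err p)]
    simp_rw [err_eq_cell]
    constructor
    · rintro ⟨w, hw⟩
      exact ⟨_, ⟨w, rfl⟩, hw⟩
    · rintro ⟨_, ⟨w, rfl⟩, hw⟩
      exact ⟨w, hw⟩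
  rw [hU]
  refine MeasurableSet.iUnion fun S => MeasurableSet.inter ?_ ?_
  · exact measurable_snd (measurableSet_mem_cells S)
  · refine measurableSet_lt ?_ measurable_const
    refine Finset.measurable_sum _ fun μ _ => Measurable.ite ?_ measurable_const measurable_const
    have : Measurable fun p : (Fin m → ℝ) × (Fin m → Fin d → ℝ) => p.1 μ := by fun_prop
    exact (this (measurableSet_singleton (signVec S μ))).compl

lemma minErr_nonneg {m d : ℕ} (p : (Fin m → ℝ) × (Fin m → Fin d → ℝ)) : 0 ≤ minErr p :=
  le_ciInf fun w => Finset.sum_nonneg fun μ _ => by split_ifs <;> norm_num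

lemma minErr_le {m d : ℕ} (p : (Fin m → ℝ) × (Fin m → Fin d → ℝ)) : minErr p ≤ m := by
  refine (ciInf_le (bddBelow_err p) 0).trans ?_
  calc _ ≤ ∑ μ : Fin m, (1 : ℝ) := Finset.sum_le_sum fun μ _ => by split_ifs <;> norm_num
    _ = m := by simp

lemma integrable_minErr {m d : ℕ} (ρ : Measure ((Fin m → ℝ) × (Fin m → Fin d → ℝ)))
    [IsFiniteMeasure ρ] : Integrable minErr ρ := by
  refine Integrable.of_bound measurable_minErr.aestronglyMeasurable (m : ℝ) ?_
  filter_upwards with p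
  rw [Real.norm_of_nonneg (minErr_nonneg p)]
  exact minErr_le p

/-- For `±1` labels, the number of errors is `(m - correlation) / 2`. -/
lemma minErr_ge {m d : ℕ} (y : Fin m → Bool) (x : Fin m → Fin d → ℝ) :
    ((m : ℝ) - (cells x).sup' (cells_nonempty x)
      (fun S => ∑ i, boolSign (y i) * signVec S i)) / 2 ≤
      minErr (fun i => boolSign (y i), x) := by
  refine le_ciInf fun w => ?_
  rw [err_eq_cell]
  have h1 := Finset.le_sup' (fun S => ∑ i, boolSign (y i) * signVec S i)
    (mem_cells.mpr ⟨w, rfl⟩ : cell x w ∈ cells x)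
  have h2 : (∑ μ, if boolSign (y μ) ≠ signVec (cell x w) μ then (1 : ℝ) else 0) =
      ∑ μ, (1 - boolSign (y μ) * signVec (cell x w) μ) / 2 := by
    refine Finset.sum_congr rfl fun μ _ => ?_
    unfold boolSign signVec
    cases y μ <;> by_cases h : μ ∈ cell x w <;> simp [h] <;> norm_num
  have h3 : ∑ μ, (1 - boolSign (y μ) * signVec (cell x w) μ) / 2 =
      ((m : ℝ) - ∑ μ, boolSign (y μ) * signVec (cell x w) μ) / 2 := by
    rw [← Finset.sum_div, Finset.sum_sub_distrib]
    simp
  simp only at h1 ⊢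
  rw [h2, h3]
  linarith

/-- Integration against i.i.d. Rademacher labels is the average over all label vectors. -/
lemma integral_pi_rad {m : ℕ} (f : (Fin m → ℝ) → ℝ) (hf : Measurable f) :
    ∫ y, f y ∂(Measure.pi fun _ : Fin m => radMeasure) =
      labelAvg (fun y => f fun i => boolSign (y i)) := by
  set ν : Measure Bool := (PMF.bernoulli 2⁻¹ (by norm_num)).toMeasure with hν
  have hmeas : Measurable boolSign := measurable_of_finite _
  have hrad : radMeasure = ν.map boolSign := by
    rw [hν, PMF.toMeasure_map _ _ hmeas]
    rfl
  have hpi : (Measure.pi fun _ : Fin m => radMeasure) =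
      (Measure.pi fun _ : Fin m => ν).map (fun y i => boolSign (y i)) := by
    have : IsProbabilityMeasure (ν.map boolSign) := hrad ▸ inferInstance
    rw [Measure.pi_map_pi (μ := fun _ : Fin m => ν) (f := fun _ => boolSign)
      (fun _ => hmeas.aemeasurable), hrad]
  have hsing : ∀ b : Bool, ν {b} = 2⁻¹ := by
    intro b
    rw [hν, PMF.toMeasure_apply_singleton _ _ (measurableSet_singleton b)]
    cases b <;> simp [PMF.bernoulli_apply]
  rw [hpi, integral_map (Measurable.aemeasurable (by fun_prop)) hf.aestronglyMeasurable,
    integral_fintype (Integrable.of_finite)]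
  unfold labelAvg
  rw [Finset.sum_div]
  refine Finset.sum_congr rfl fun y _ => ?_
  have : (Measure.pi fun _ : Fin m => ν).real {y} = (2 ^ m)⁻¹ := by
    rw [Measure.real, Measure.pi_singleton]
    simp [hsing]
  rw [this, smul_eq_mul, div_eq_inv_mul]

instance (d : ℕ) : IsProbabilityMeasure (stdGaussian d) := by
  unfold _root_.stdGaussian
  infer_instance

/-- The Rademacher bound holds for every configuration of the points, so it survives integration
over them. -/
lemma integral_minErr_ge {m d : ℕ} (hm : 1 ≤ m) (hd : 1 ≤ d) :
    (m : ℝ) / 2 - 36 * (Real.sqrt d * Real.sqrt m) ≤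
      ∫ p, minErr p ∂((Measure.pi fun _ : Fin m => radMeasure).prod
        (Measure.pi fun _ : Fin m => stdGaussian d)) := by
  rw [integral_prod_symm _ (integrable_minErr _)]
  have hx : ∀ x : Fin m → Fin d → ℝ, (m : ℝ) / 2 - 36 * (Real.sqrt d * Real.sqrt m) ≤
      ∫ y, minErr (y, x) ∂(Measure.pi fun _ : Fin m => radMeasure) := by
    intro x
    rw [integral_pi_rad (fun y => minErr (y, x)) (measurable_minErr.comp (by fun_prop))]
    refine le_trans ?_ (labelAvg_mono fun y => minErr_ge y x)
    have h := vc_rademacher_bound hm hd (cells x) (cells_nonempty x) (card_le_of_shatters_cells x)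
    have e : labelAvg (fun y : Fin m → Bool => ((m : ℝ) - (cells x).sup' (cells_nonempty x)
        (fun S => ∑ i, boolSign (y i) * signVec S i)) / 2) =
        ((m : ℝ) - labelAvg (fun y => (cells x).sup' (cells_nonempty x)
        (fun S => ∑ i, boolSign (y i) * signVec S i))) / 2 := by
      unfold labelAvg
      rw [← Finset.sum_div, Finset.sum_sub_distrib]
      simp
      field_simp
    rw [e]
    linarith
  calc (m : ℝ) / 2 - 36 * (Real.sqrt d * Real.sqrt m)
      = ∫ _ : Fin m → Fin d → ℝ, ((m : ℝ) / 2 - 36 * (Real.sqrt d * Real.sqrt m))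
          ∂(Measure.pi fun _ : Fin m => stdGaussian d) := by simp
    _ ≤ _ := integral_mono (integrable_const _) (integrable_minErr _).integral_prod_right hx

/-- There is a universal constant `C > 0` such that for all `d, m ≥ 1`, with i.i.d.
`N(0, I_d)` points and i.i.d. uniform `±1` labels independent of them, the average
ground-state energy per dimension of the perceptron satisfies
`e_gs ≥ (α/2)(1 − C/√α)`, `α = m/d`. -/
theorem groundState_lower_bound :
    ∃ C : ℝ, 0 < C ∧ ∀ (d m : ℕ), 1 ≤ d → 1 ≤ m →
      ((m : ℝ) / d) / 2 * (1 - C / Real.sqrt ((m : ℝ) / d)) ≤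
        (d : ℝ)⁻¹ * ∫ p : (Fin m → ℝ) × (Fin m → Fin d → ℝ),
          (⨅ w : Fin d → ℝ, ∑ μ, if p.1 μ ≠ sgn (∑ i, w i * p.2 μ i) then (1 : ℝ) else 0)
        ∂((Measure.pi fun _ : Fin m => radMeasure).prod
            (Measure.pi fun _ : Fin m => stdGaussian d)) := by
  refine ⟨72, by norm_num, fun d m hd hm => ?_⟩
  have h := integral_minErr_ge hm hd
  have hm' : (0 : ℝ) < m := by exact_mod_cast hm
  have hd' : (0 : ℝ) < d := by exact_mod_cast hd
  have ha : 0 < Real.sqrt d := Real.sqrt_pos.mpr hd'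
  have hb : 0 < Real.sqrt m := Real.sqrt_pos.mpr hm'
  have hda : (d : ℝ) = Real.sqrt d * Real.sqrt d := (Real.mul_self_sqrt hd'.le).symm
  have hmb : (m : ℝ) = Real.sqrt m * Real.sqrt m := (Real.mul_self_sqrt hm'.le).symm
  have e : ((m : ℝ) / d) / 2 * (1 - 72 / Real.sqrt ((m : ℝ) / d)) =
      (d : ℝ)⁻¹ * ((m : ℝ) / 2 - 36 * (Real.sqrt d * Real.sqrt m)) := by
    rw [Real.sqrt_div hm'.le]
    have key : (m : ℝ) / (Real.sqrt m / Real.sqrt d) = Real.sqrt d * Real.sqrt m := by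
      rw [div_div_eq_mul_div, div_eq_iff hb.ne']
      nth_rewrite 1 [hmb]
      ring
    rw [← key]
    field_simp
    ring
  rw [e]
  exact mul_le_mul_of_nonneg_left h (by positivity)
end

section
/- Fix α > 0 and for each d set m = ⌈αd⌉. If x^(1),…,x^(m) are i.i.d. N(0, I_d) and y^(1),…,y^(m) are i.i.d. uniform ±1 independent of the points, then limsup_{d→∞} (1/d)·E[ inf_{w∈ℝ^d} Σ_{μ=1}^m 1[y^(μ) ≠ sign(wᵀx^(μ))] ] ≤ (α/2)·(1 − erf(1/√(2α))), where erf is the Gauss error function. -/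
/-!
The infimum over weights is at most the number of errors made by the Hebb weight
`w = ∑ ν, y ν • x ν`, so it suffices to bound the expected number of these errors.

Fix labels `y ν = ±1` and an index `μ`. An error on sample `μ` forces `y μ * ⟨w, x μ⟩ ≤ 0`, and
`y μ * ⟨w, x μ⟩ = ‖x μ‖² + ∑_{ν ≠ μ} y μ * y ν * ⟨x μ, x ν⟩`. Conditionally on `x μ`, the last sum
is a centred Gaussian of variance `(m - 1) ‖x μ‖²`, so the conditional probability of this event
is the Gaussian tail at `‖x μ‖ / √(m - 1)` (`cond_prob`). By Chebyshev's inequality `‖x μ‖²` is at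
least `(1 - ε) d` outside an event of probability `O(1 / (ε² d))` (`norm_sq_small`). Fubini
combines the two into a bound on the error probability (`prod_bound`, `fixed_labels_bound`) and
hence on the expected energy (`energy_bound`). With `ε = d ^ (-1/4)` and `m = ⌈α d⌉` the bound
divided by `d` tends to `α` times the Gaussian tail at `1 / √α`, which is
`(α / 2) (1 - erf (1 / √(2α)))` (`gaussTail_eq`).

Measurability of the infimum is never needed: a non-integrable integrand has integral `0`, and
`integral_mono_of_nonneg` only asks the dominating function to be integrable.
-/

open MeasureTheory ProbabilityTheory Filter Finset

/-- The Gauss error function `erf(x) = (2/√π) ∫₀ˣ e^{-t²} dt`. -/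
noncomputable def erf (x : ℝ) : ℝ :=
  (2 / Real.sqrt Real.pi) * ∫ t in (0 : ℝ)..x, Real.exp (-t ^ 2)

/-! ### Gaussian preliminaries -/

instance (d : ℕ) : IsProbabilityMeasure (_root_.stdGaussian d) := by
  unfold _root_.stdGaussian; infer_instance

/-- A sum of independent centred Gaussians is a centred Gaussian whose variance is the sum of the
variances; independence is realised by a product space. -/
lemma map_sum_pi_gaussian {ι : Type*} [Fintype ι] {Ω : ι → Type*}
    [∀ i, MeasurableSpace (Ω i)] (P : ∀ i, Measure (Ω i)) [∀ i, IsProbabilityMeasure (P i)]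
    (X : ∀ i, Ω i → ℝ) (v : ι → NNReal) (hX : ∀ i, Measurable (X i))
    (hlaw : ∀ i, (P i).map (X i) = gaussianReal 0 (v i)) :
    (Measure.pi P).map (fun ω => ∑ i, X i (ω i)) = gaussianReal 0 (∑ i, v i) := by
  have hev : ∀ i, (Measure.pi P).map (fun ω => X i (ω i)) = gaussianReal 0 (v i) := fun i => by
    rw [← hlaw i, ← (measurePreserving_eval P i).map_eq,
      Measure.map_map (hX i) (measurable_pi_apply i)]
    rfl
  have hL2 : ∀ i, MemLp (X i) 2 (P i) := fun i => by
    have : MemLp id 2 ((P i).map (X i)) := by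
      rw [hlaw i]; exact memLp_id_gaussianReal 2
    exact (memLp_map_measure_iff (by fun_prop) (hX i).aemeasurable).1 this
  have hG : ∀ i, HasGaussianLaw (fun ω : ∀ i, Ω i => X i (ω i)) (Measure.pi P) := fun i => by
    constructor
    rw [hev i]; infer_instance
  have hind : iIndepFun (fun i (ω : ∀ i, Ω i) => X i (ω i)) (Measure.pi P) :=
    iIndepFun_pi fun i => (hX i).aemeasurable
  have hS := iIndepFun.hasGaussianLaw_fun_sum hG hind
  have hsm : ∀ i, (P i)[X i] = 0 := fun i => by
    have := integral_map (μ := P i) (hX i).aemeasurable (f := fun x : ℝ => x) (by fun_prop)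
    rw [← this, hlaw i, integral_id_gaussianReal]
  have hmean : ∫ ω, ∑ i, X i (ω i) ∂(Measure.pi P) = 0 := by
    rw [integral_finsetSum]
    · refine Finset.sum_eq_zero fun i _ => ?_
      rw [← hsm i]
      exact integral_comp_eval (hL2 i).aestronglyMeasurable
    · intro i _
      exact integrable_comp_eval ((hL2 i).integrable (by norm_num))
  have hvar : Var[fun ω : ∀ i, Ω i => ∑ i, X i (ω i); Measure.pi P] = ∑ i, (v i : ℝ) := by
    have := variance_sum_pi hL2
    rw [show (fun ω : ∀ i, Ω i => ∑ i, X i (ω i)) = ∑ i, fun ω : ∀ i, Ω i => X i (ω i) by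
      ext; simp, this]
    refine Finset.sum_congr rfl fun i _ => ?_
    rw [← variance_id_map (hX i).aemeasurable, hlaw i, variance_id_gaussianReal]
  rw [hS.map_eq_gaussianReal, hmean, hvar]
  congr 1
  ext; push_cast [Real.coe_toNNReal']
  exact max_eq_left (Finset.sum_nonneg fun i _ => (v i).2)

/-- The tail `P(N ≤ -t) = P(N ≥ t)` of a standard Gaussian `N`. -/
noncomputable def gaussTail (t : ℝ) : ℝ := (gaussianReal 0 1).real (Set.Iic (-t))

lemma gaussTail_anti {s t : ℝ} (h : s ≤ t) : gaussTail t ≤ gaussTail s :=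
  measureReal_mono (Set.Iic_subset_Iic.2 (neg_le_neg h))

lemma gaussTail_eq {t : ℝ} (ht : 0 ≤ t) : gaussTail t = (1 - erf (t / √2)) / 2 := by
  have h1 : gaussTail t = ∫ x in Set.Ioi t, gaussianPDFReal 0 1 x := by
    unfold gaussTail
    rw [Measure.real, gaussianReal_apply_eq_integral _ one_ne_zero,
      ENNReal.toReal_ofReal (integral_nonneg fun _ => gaussianPDFReal_nonneg _ _ _),
      ← integral_comp_neg_Ioi]
    simp [gaussianPDFReal_def]
  have hp : ∀ x, gaussianPDFReal 0 1 x = (√(2 * Real.pi))⁻¹ * Real.exp (-(1/2) * x ^ 2) := by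
    intro x
    simp [gaussianPDFReal_def]; left; ring
  have hInteg : Integrable fun x : ℝ => Real.exp (-(1/2) * x ^ 2) :=
    integrable_exp_neg_mul_sq (by norm_num)
  have h2 : ∫ x in Set.Ioi t, Real.exp (-(1/2) * x ^ 2)
      = √(Real.pi / (1/2)) / 2 - ∫ x in (0:ℝ)..t, Real.exp (-(1/2) * x ^ 2) := by
    rw [← integral_gaussian_Ioi, intervalIntegral.integral_of_le ht,
      ← Set.Ioc_union_Ioi_eq_Ioi ht, setIntegral_union (Set.Ioc_disjoint_Ioi le_rfl)
        measurableSet_Ioi hInteg.integrableOn hInteg.integrableOn]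
    ring
  have h3 : ∫ x in (0:ℝ)..t, Real.exp (-(1/2) * x ^ 2)
      = √2 * ∫ x in (0:ℝ)..(t / √2), Real.exp (-x ^ 2) := by
    have := intervalIntegral.integral_comp_div (a := 0) (b := t)
      (fun x : ℝ => Real.exp (-x ^ 2)) (c := √2) (by positivity)
    rw [zero_div, smul_eq_mul] at this
    rw [← this]
    congr 1; ext x
    rw [div_pow, Real.sq_sqrt (by norm_num)]; ring_nf
  rw [h1]
  simp_rw [hp]
  rw [integral_const_mul, h2, h3, erf]
  have e1 : √(Real.pi / (1/2)) = √2 * √Real.pi := by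
    rw [← Real.sqrt_mul (by norm_num)]; ring_nf
  have e2 : √(2 * Real.pi) = √2 * √Real.pi := Real.sqrt_mul (by norm_num) _
  rw [e1, e2]
  have : √Real.pi ≠ 0 := by positivity
  have : √2 ≠ 0 := by positivity
  field_simp

lemma continuous_erf : Continuous erf := by
  unfold erf
  refine continuous_const.mul ?_
  exact intervalIntegral.continuous_primitive
    (fun a b => (by fun_prop : Continuous fun t : ℝ => Real.exp (-t ^ 2)).intervalIntegrable a b) 0

/-- The variance of the square of a standard Gaussian. Only its finiteness matters. -/
noncomputable def sqVar : ℝ := Var[fun t : ℝ => t ^ 2; gaussianReal 0 1]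

/-- Chebyshev bound on the lower deviations of `‖x‖²`, which has mean `d` and variance
`d * sqVar`. -/
lemma norm_sq_small {d : ℕ} (hd : 0 < d) {ε : ℝ} (hε : 0 < ε) :
    (_root_.stdGaussian d).real {x | ∑ i, x i ^ 2 ≤ (1 - ε) * d} ≤ sqVar / (ε ^ 2 * d) := by
  -- Squares lie in `L²` because the Gaussian has a fourth moment.
  have hL2 : MemLp (fun t : ℝ => t ^ 2) 2 (gaussianReal 0 1) := by
    have := (memLp_id_gaussianReal (μ := 0) (v := 1) 4)
    have h := this.norm_rpow_div 2
    convert h using 1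
    · ext x; simp
    · norm_num
      rw [show (4:ENNReal) = 2 * 2 by norm_num, ENNReal.mul_div_cancel_right] <;> simp
  have hmean1 : ∫ t, t ^ 2 ∂(gaussianReal 0 1) = 1 := by
    have := variance_fun_id_gaussianReal (μ := 0) (v := 1)
    rw [variance_of_integral_eq_zero (by fun_prop) (by simp)] at this
    simpa using this
  set X : (Fin d → ℝ) → ℝ := fun x => ∑ i, x i ^ 2 with hX
  have hmean : ∫ x, X x ∂(_root_.stdGaussian d) = d := by
    rw [hX, integral_finsetSum]
    · rw [Finset.sum_congr rfl (g := fun _ => (1:ℝ))]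
      · simp
      · intro i _
        rw [← hmean1]
        exact integral_comp_eval (μ := fun _ : Fin d => gaussianReal 0 1) (i := i)
          hL2.aestronglyMeasurable
    · intro i _
      exact integrable_comp_eval (μ := fun _ : Fin d => gaussianReal 0 1) (i := i)
        (hL2.integrable (by norm_num))
  have hvar : Var[X; _root_.stdGaussian d] = d * sqVar := by
    have := variance_sum_pi (μ := fun _ : Fin d => gaussianReal 0 1)
      (X := fun _ t => t ^ 2) (fun _ => hL2)
    rw [show X = ∑ i, fun x : Fin d → ℝ => x i ^ 2 by ext; simp [hX]]
    unfold _root_.stdGaussian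
    rw [this]; simp [sqVar]
  have hXL : MemLp X 2 (_root_.stdGaussian d) := by
    refine memLp_finsetSum _ fun i _ => ?_
    exact hL2.comp_measurePreserving (measurePreserving_eval (fun _ : Fin d => gaussianReal 0 1) i)
  have hd' : (0:ℝ) < d := by exact_mod_cast hd
  have := meas_ge_le_variance_div_sq hXL (c := ε * d) (by positivity)
  rw [hmean, hvar] at this
  have hle : (_root_.stdGaussian d) {x | X x ≤ (1 - ε) * d} ≤
      ENNReal.ofReal (d * sqVar / (ε * d) ^ 2) := by
    refine (measure_mono fun x hx => ?_).trans this
    simp only [Set.mem_ofPred_eq] at hx ⊢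
    rw [abs_sub_comm]
    exact le_trans (by linarith) (le_abs_self _)
  have hs : 0 ≤ sqVar := variance_nonneg _ _
  have h2 := ENNReal.toReal_mono ENNReal.ofReal_ne_top hle
  rw [ENNReal.toReal_ofReal (by positivity)] at h2
  refine h2.trans (le_of_eq ?_)
  field_simp

/-! ### Error probability of the Hebb rule -/

/-- Conditional error probability: for a fixed sample `a`, the other samples contribute a centred
Gaussian of variance `n * ‖a‖²`, whatever the signs `c`. -/
lemma cond_prob {n d : ℕ} (hn : 0 < n) (c : Fin n → ℝ) (hc : ∀ j, c j ^ 2 = 1)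
    (a : Fin d → ℝ) (ha : 0 < ∑ i, a i ^ 2) :
    (Measure.pi fun _ : Fin n => _root_.stdGaussian d)
      {z | ∑ i, a i ^ 2 + ∑ j, ∑ i, c j * a i * z j i ≤ 0}
      = ENNReal.ofReal (gaussTail √((∑ i, a i ^ 2) / n)) := by
  set s := ∑ i, a i ^ 2 with hs
  have hn' : (0:ℝ) < n := by exact_mod_cast hn
  have inner : ∀ j, (_root_.stdGaussian d).map (fun z => ∑ i, c j * a i * z i)
      = gaussianReal 0 (∑ i, .mk ((c j * a i) ^ 2) (sq_nonneg _)) := fun j => by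
    refine map_sum_pi_gaussian (fun _ : Fin d => gaussianReal 0 1)
      (fun i t => c j * a i * t) _ (fun i => by fun_prop) fun i => ?_
    rw [gaussianReal_map_const_mul]; simp
  have outer := map_sum_pi_gaussian (fun _ : Fin n => _root_.stdGaussian d)
      (fun j z => ∑ i, c j * a i * z i) _ (fun j => by fun_prop) inner
  have hvar : (∑ j, ∑ i, NNReal.mk ((c j * a i) ^ 2) (sq_nonneg _) : NNReal)
      = .mk (√(n * s) ^ 2) (sq_nonneg _) * 1 := by
    ext
    push_cast
    simp_rw [mul_pow, hc, one_mul]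
    rw [Real.sq_sqrt (by positivity)]
    simp [hs]
  have hms : 0 < √(n * s) := by positivity
  have hset : {z : Fin n → Fin d → ℝ | s + ∑ j, ∑ i, c j * a i * z j i ≤ 0}
      = (fun z => ∑ j, ∑ i, c j * a i * z j i) ⁻¹' Set.Iic (-s) := by
    ext z
    simp only [Set.mem_ofPred_eq, Set.mem_preimage, Set.mem_Iic]
    constructor <;> intro h <;> linarith
  have hpre : (fun t => √(n * s) * t) ⁻¹' Set.Iic (-s) = Set.Iic (-√(s / n)) := by
    ext t
    have : √(n * s) * √(s / n) = s := by
      rw [← Real.sqrt_mul (by positivity)]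
      rw [show n * s * (s / n) = s * s by field_simp, Real.sqrt_mul_self ha.le]
    simp only [Set.mem_preimage, Set.mem_Iic]
    rw [show -s = √(n * s) * (-√(s / n)) by linarith]
    exact mul_le_mul_iff_right₀ hms
  rw [hset, ← Measure.map_apply (by fun_prop) measurableSet_Iic, outer, hvar,
    show (0:ℝ) = √(n * s) * 0 by simp, ← gaussianReal_map_const_mul,
    Measure.map_apply (by fun_prop) measurableSet_Iic, hpre, gaussTail, ofReal_measureReal]

/-- Upper bound for the probability that the Hebb rule built from `n + 1` samples in dimension `d`
misclassifies a given one of them: the probability that its squared norm is below `(1 - ε) d`, plus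
the largest conditional error probability otherwise. -/
noncomputable def errBound (n d : ℕ) (ε : ℝ) : ℝ :=
  sqVar / (ε ^ 2 * d) + gaussTail √((1 - ε) * d / n)

lemma sqVar_nonneg : 0 ≤ sqVar := variance_nonneg _ _

lemma gaussTail_nonneg (t : ℝ) : 0 ≤ gaussTail t := measureReal_nonneg

lemma errBound_nonneg (n d : ℕ) (ε : ℝ) : 0 ≤ errBound n d ε := by
  have := sqVar_nonneg
  have := gaussTail_nonneg √((1 - ε) * d / n)
  unfold errBound; positivity

/-- Integrates `cond_prob` over the distinguished sample `q.1`, treating separately the unlikely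
event that `q.1` has small norm. -/
lemma prod_bound {n d : ℕ} (hn : 0 < n) (hd : 0 < d) {ε : ℝ} (hε : 0 < ε) (hε1 : ε < 1)
    (c : Fin n → ℝ) (hc : ∀ j, c j ^ 2 = 1) :
    ((_root_.stdGaussian d).prod (Measure.pi fun _ : Fin n => _root_.stdGaussian d))
      {q | ∑ i, q.1 i ^ 2 + ∑ j, ∑ i, c j * q.1 i * q.2 j i ≤ 0}
      ≤ ENNReal.ofReal (errBound n d ε) := by
  have hn' : (0:ℝ) < n := by exact_mod_cast hn
  have hd' : (0:ℝ) < d := by exact_mod_cast hd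
  set S : Set (Fin d → ℝ) := {x | ∑ i, x i ^ 2 ≤ (1 - ε) * d} with hS
  have hSm : MeasurableSet S := measurableSet_le (by fun_prop) (by fun_prop)
  set B : Set ((Fin d → ℝ) × (Fin n → Fin d → ℝ)) :=
    {q | ∑ i, q.1 i ^ 2 + ∑ j, ∑ i, c j * q.1 i * q.2 j i ≤ 0} with hB
  have hBm : MeasurableSet B := measurableSet_le (by fun_prop) (by fun_prop)
  have hsub : B ⊆ (S ×ˢ Set.univ) ∪ (B ∩ (Sᶜ ×ˢ Set.univ)) := by
    intro q hq
    by_cases h : q.1 ∈ S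
    · left; exact ⟨h, trivial⟩
    · right; exact ⟨hq, h, trivial⟩
  refine (measure_mono hsub).trans ((measure_union_le _ _).trans ?_)
  have := sqVar_nonneg
  rw [errBound, ENNReal.ofReal_add (by positivity) (gaussTail_nonneg _)]
  gcongr
  · rw [Measure.prod_prod, measure_univ, mul_one, ← ofReal_measureReal]
    exact ENNReal.ofReal_le_ofReal (norm_sq_small hd hε)
  · rw [Measure.prod_apply (hBm.inter (hSm.compl.prod MeasurableSet.univ))]
    refine (lintegral_mono (g := fun _ => ENNReal.ofReal (gaussTail √((1 - ε) * d / n)))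
      fun a => ?_).trans (by simp)
    by_cases h : a ∈ S
    · have : Prod.mk a ⁻¹' (B ∩ (Sᶜ ×ˢ Set.univ)) = ∅ := by
        ext z; simp [h]
      simp [this]
    · have h' : (1 - ε) * d < ∑ i, a i ^ 2 := not_le.1 h
      have h0 : 0 < (1 - ε) * d := mul_pos (by linarith) hd'
      calc _ ≤ _ := measure_mono (Set.preimage_mono Set.inter_subset_left)
        _ = _ := cond_prob hn c hc a (h0.trans h')
        _ ≤ _ := ENNReal.ofReal_le_ofReal (gaussTail_anti (by gcongr))

lemma measurable_sgn : Measurable sgn :=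
  Measurable.ite measurableSet_Ici measurable_const measurable_const

lemma mul_nonpos_of_ne_sgn {y t : ℝ} (hy : y = 1 ∨ y = -1) (h : y ≠ sgn t) : y * t ≤ 0 := by
  unfold sgn at h
  split_ifs at h with h0
  · rcases hy with rfl | rfl
    · exact absurd rfl h
    · linarith
  · rcases hy with rfl | rfl
    · linarith
    · exact absurd rfl h

/-- Error probability of the Hebb rule on sample `μ` for fixed labels. Splitting off coordinate `μ`
reduces it to `prod_bound` with signs `c j = y μ * y (μ.succAbove j)`. -/
lemma fixed_labels_bound {n d : ℕ} (hn : 0 < n) (hd : 0 < d) {ε : ℝ} (hε : 0 < ε) (hε1 : ε < 1)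
    (y : Fin (n + 1) → ℝ) (hy : ∀ ν, y ν = 1 ∨ y ν = -1) (μ : Fin (n + 1)) :
    (Measure.pi fun _ : Fin (n + 1) => _root_.stdGaussian d)
      {x | y μ ≠ sgn (∑ i, (∑ ν, y ν * x ν i) * x μ i)} ≤ ENNReal.ofReal (errBound n d ε) := by
  have hsq : ∀ ν, y ν ^ 2 = 1 := fun ν => by rcases hy ν with h | h <;> rw [h] <;> norm_num
  have hc : ∀ j : Fin n, (y μ * y (μ.succAbove j)) ^ 2 = 1 := fun j => by
    rw [mul_pow, hsq, hsq, one_mul]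
  have hmp := measurePreserving_piFinSuccAbove
    (fun _ : Fin (n + 1) => _root_.stdGaussian d) μ
  have hBm : MeasurableSet {q : (Fin d → ℝ) × (Fin n → Fin d → ℝ) |
      ∑ i, q.1 i ^ 2 + ∑ j, ∑ i, (y μ * y (μ.succAbove j)) * q.1 i * q.2 j i ≤ 0} :=
    measurableSet_le (by fun_prop) (by fun_prop)
  refine le_trans ?_ (prod_bound hn hd hε hε1 _ hc)
  rw [← hmp.measure_preimage hBm.nullMeasurableSet]
  refine measure_mono fun x hx => ?_
  have h := mul_nonpos_of_ne_sgn (hy μ) hx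
  have key : y μ * ∑ i, (∑ ν, y ν * x ν i) * x μ i = ∑ i, x μ i ^ 2 +
      ∑ j, ∑ i, (y μ * y (μ.succAbove j)) * x μ i * x (μ.succAbove j) i := by
    rw [Finset.sum_comm, ← Finset.sum_add_distrib, Finset.mul_sum]
    refine Finset.sum_congr rfl fun i _ => ?_
    rw [Fin.sum_univ_succAbove _ μ, add_mul, mul_add, Finset.sum_mul, Finset.mul_sum]
    congr 1
    · linear_combination x μ i ^ 2 * hsq μ
    · exact Finset.sum_congr rfl fun j _ => by ring
  rw [key] at h
  exact h

lemma radMeasure_ae : ∀ᵐ t ∂radMeasure, t = 1 ∨ t = -1 := by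
  have hm : MeasurableSet {t : ℝ | ¬ (t = 1 ∨ t = -1)} := by
    apply MeasurableSet.compl
    exact (measurableSet_singleton (1:ℝ)).union (measurableSet_singleton (-1))
  rw [ae_iff, radMeasure, PMF.toMeasure_apply_eq_zero_iff _ hm, Set.disjoint_left]
  intro t ht
  simp only [PMF.mem_support_map_iff] at ht
  obtain ⟨b, -, rfl⟩ := ht
  cases b <;> simp

/-! ### The energy bound and its limit -/

lemma energy_bound {m d : ℕ} (hm : 2 ≤ m) (hd : 0 < d) {ε : ℝ} (hε : 0 < ε) (hε1 : ε < 1) :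
    ∫ p : (Fin m → ℝ) × (Fin m → Fin d → ℝ),
      (⨅ w : Fin d → ℝ, ∑ μ, if p.1 μ ≠ sgn (∑ i, w i * p.2 μ i) then (1 : ℝ) else 0)
      ∂((Measure.pi fun _ : Fin m => radMeasure).prod
        (Measure.pi fun _ : Fin m => _root_.stdGaussian d)) ≤ m * errBound (m - 1) d ε := by
  obtain ⟨n, rfl⟩ : ∃ n, m = n + 1 := ⟨m - 1, by omega⟩
  have hn : 0 < n := by omega
  set P := (Measure.pi fun _ : Fin (n + 1) => radMeasure).prod
        (Measure.pi fun _ : Fin (n + 1) => _root_.stdGaussian d) with hP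
  let A : Fin (n + 1) → Set ((Fin (n + 1) → ℝ) × (Fin (n + 1) → Fin d → ℝ)) := fun μ =>
    {p | p.1 μ ≠ sgn (∑ i, (∑ ν, p.1 ν * p.2 ν i) * p.2 μ i)}
  have hAm : ∀ μ, MeasurableSet (A μ) := fun μ => by
    refine (measurableSet_eq_fun (by fun_prop) (measurable_sgn.comp ?_)).compl
    fun_prop
  have hA : ∀ μ, P.real (A μ) ≤ errBound n d ε := fun μ => by
    refine ENNReal.toReal_le_of_le_ofReal (errBound_nonneg _ _ _) ?_
    rw [hP, Measure.prod_apply (hAm μ)]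
    have hae : ∀ᵐ y ∂(Measure.pi fun _ : Fin (n + 1) => radMeasure),
        ∀ ν, y ν = 1 ∨ y ν = -1 := by
      rw [ae_all_iff]
      intro ν
      exact (measurePreserving_eval (fun _ : Fin (n + 1) => radMeasure)
        ν).quasiMeasurePreserving.ae radMeasure_ae
    refine (lintegral_mono_ae (g := fun _ => ENNReal.ofReal (errBound n d ε)) ?_).trans (by simp)
    filter_upwards [hae] with y hy
    exact fixed_labels_bound hn hd hε hε1 y hy μ
  have hInteg : ∀ μ, Integrable ((A μ).indicator fun _ => (1:ℝ)) P := fun μ =>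
    (integrable_const 1).indicator (hAm μ)
  have hnn : ∀ (p : (Fin (n + 1) → ℝ) × (Fin (n + 1) → Fin d → ℝ)) (w : Fin d → ℝ),
      0 ≤ ∑ μ, if p.1 μ ≠ sgn (∑ i, w i * p.2 μ i) then (1 : ℝ) else 0 := fun p w =>
    Finset.sum_nonneg fun μ _ => by split_ifs <;> norm_num
  calc _ ≤ ∫ p, ∑ μ, (A μ).indicator (fun _ => (1:ℝ)) p ∂P := by
        -- The infimum is bounded by its value at the Hebb weight.
        refine integral_mono_of_nonneg (.of_forall fun p => Real.iInf_nonneg (hnn p))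
          (integrable_finsetSum _ fun μ _ => hInteg μ) (.of_forall fun p => ?_)
        refine (ciInf_le ⟨0, ?_⟩ (fun i => ∑ ν, p.1 ν * p.2 ν i)).trans (le_of_eq ?_)
        · rintro _ ⟨w, rfl⟩; exact hnn p w
        · refine Finset.sum_congr rfl fun μ _ => ?_
          simp only [Set.indicator_apply, A, Set.mem_ofPred_eq]
    _ = ∑ μ, P.real (A μ) := by
        rw [integral_finsetSum _ fun μ _ => hInteg μ]
        exact Finset.sum_congr rfl fun μ _ => integral_indicator_one (hAm μ)
    _ ≤ ∑ _μ : Fin (n + 1), errBound n d ε := Finset.sum_le_sum fun μ _ => hA μ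
    _ = _ := by simp

/-- With `m = ⌈αd⌉` i.i.d. `N(0, I_d)` points and i.i.d. uniform `±1` labels independent
of them, the average ground-state energy per dimension of the perceptron satisfies
`limsup_{d→∞} e_gs ≤ (α/2)(1 − erf(1/√(2α)))`. -/
theorem groundState_upper_bound (α : ℝ) (hα : 0 < α) :
    Filter.limsup (fun d : ℕ =>
        (d : ℝ)⁻¹ * ∫ p : (Fin ⌈α * d⌉₊ → ℝ) × (Fin ⌈α * d⌉₊ → Fin d → ℝ),
          (⨅ w : Fin d → ℝ, ∑ μ, if p.1 μ ≠ sgn (∑ i, w i * p.2 μ i) then (1 : ℝ) else 0)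
        ∂((Measure.pi fun _ : Fin ⌈α * d⌉₊ => radMeasure).prod
            (Measure.pi fun _ : Fin ⌈α * d⌉₊ => stdGaussian d)))
      Filter.atTop ≤
      α / 2 * (1 - erf (1 / Real.sqrt (2 * α))) := by
  have hcast : Tendsto (fun d : ℕ => (d : ℝ)) atTop atTop := tendsto_natCast_atTop_atTop
  -- The tolerance `d ^ (-1/4)` vanishes slowly enough that the Chebyshev term `1 / (ε² d)` does too.
  let ε : ℕ → ℝ := fun d => (√√(d : ℝ))⁻¹
  have hε0 : Tendsto ε atTop (nhds 0) :=
    (Real.tendsto_sqrt_atTop.comp (Real.tendsto_sqrt_atTop.comp hcast)).inv_tendsto_atTop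
  have hm : Tendsto (fun d : ℕ => (⌈α * d⌉₊ : ℝ) / d) atTop (nhds α) :=
    (tendsto_nat_ceil_mul_div_atTop hα.le).comp hcast
  have hαd : Tendsto (fun d : ℕ => α * (d : ℝ)) atTop atTop := hcast.const_mul_atTop hα
  have hev2 : ∀ᶠ d : ℕ in atTop, 2 ≤ ⌈α * d⌉₊ := by
    filter_upwards [hαd.eventually_ge_atTop 2] with d h
    exact_mod_cast h.trans (Nat.le_ceil _)
  have hle : ∀ᶠ d : ℕ in atTop,
      (d : ℝ)⁻¹ * ∫ p : (Fin ⌈α * d⌉₊ → ℝ) × (Fin ⌈α * d⌉₊ → Fin d → ℝ),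
          (⨅ w : Fin d → ℝ, ∑ μ, if p.1 μ ≠ sgn (∑ i, w i * p.2 μ i) then (1 : ℝ) else 0)
        ∂((Measure.pi fun _ : Fin ⌈α * d⌉₊ => radMeasure).prod
            (Measure.pi fun _ : Fin ⌈α * d⌉₊ => stdGaussian d)) ≤
      (⌈α * d⌉₊ : ℝ) / d * errBound (⌈α * d⌉₊ - 1) d (ε d) := by
    filter_upwards [hev2, eventually_gt_atTop 0, hε0.eventually_lt_const one_pos] with d h2 h0 h1
    have hd' : (0:ℝ) < d := by exact_mod_cast h0
    have hpos : 0 < ε d := by positivity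
    rw [div_eq_inv_mul, mul_assoc]
    exact mul_le_mul_of_nonneg_left (energy_bound h2 h0 hpos h1) (by positivity)
  have hlim1 : Tendsto (fun d : ℕ => sqVar / (ε d ^ 2 * d)) atTop (nhds 0) := by
    have : Tendsto (fun d : ℕ => √(d:ℝ)) atTop atTop := Real.tendsto_sqrt_atTop.comp hcast
    refine (this.const_div_atTop sqVar).congr fun d => ?_
    congr 1
    simp only [ε]
    rw [inv_pow, Real.sq_sqrt (by positivity), inv_mul_eq_div, Real.div_sqrt]
  have hratio : Tendsto (fun d : ℕ => (1 - ε d) * d / ((⌈α * d⌉₊ - 1 : ℕ) : ℝ)) atTop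
      (nhds (1 / α)) := by
    have h1 : Tendsto (fun d : ℕ => (⌈α * d⌉₊ : ℝ) / d - (d : ℝ)⁻¹) atTop (nhds (α - 0)) :=
      hm.sub hcast.inv_tendsto_atTop
    have h2 := (hε0.const_sub 1).div h1 (by simpa using hα.ne')
    rw [sub_zero, sub_zero] at h2
    refine h2.congr' ?_
    filter_upwards [hev2, eventually_gt_atTop 0] with d h2 h0
    have hd' : (0:ℝ) < d := by exact_mod_cast h0
    rw [Pi.div_apply, Nat.cast_sub (by omega), Nat.cast_one]
    field_simp
  have hlim2 : Tendsto (fun d : ℕ => gaussTail √((1 - ε d) * d / ((⌈α * d⌉₊ - 1 : ℕ) : ℝ)))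
      atTop (nhds ((1 - erf (1 / √(2 * α))) / 2)) := by
    have h : √(1 / α) / √2 = 1 / √(2 * α) := by
      rw [← Real.sqrt_div (by positivity), div_div, mul_comm α 2, Real.sqrt_div' _ (by positivity),
        Real.sqrt_one]
    rw [← h]
    have hc : Continuous fun t : ℝ => (1 - erf (√t / √2)) / 2 := by
      have := continuous_erf
      fun_prop
    refine ((hc.tendsto (1 / α)).comp hratio).congr fun d => ?_
    exact (gaussTail_eq (Real.sqrt_nonneg _)).symm
  have hlim := hm.mul (hlim1.add hlim2)
  rw [zero_add, show α * ((1 - erf (1 / √(2 * α))) / 2) = α / 2 * (1 - erf (1 / √(2 * α))) by ring]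
    at hlim
  rw [← hlim.limsup_eq]
  refine limsup_le_limsup hle ?_ hlim.isBoundedUnder_le
  refine IsBoundedUnder.isCoboundedUnder_le ⟨0, ?_⟩
  refine eventually_map.2 (.of_forall fun d => ?_)
  refine mul_nonneg (by positivity) (integral_nonneg fun p => Real.iInf_nonneg fun w => ?_)
  exact Finset.sum_nonneg fun μ _ => by split_ifs <;> norm_num
end
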